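/- arXiv:math/0210028 — 2 statements merged into one kernel-verified Lean document; each statement's English description precedes it below -/
import Mathlib

section
/- Let z_1, z_2, z_3 ∈ ℂ be pairwise non-colliding on the cylinder of radius 1 (sin((z_k − z_l)/2) ≠ 0 for k ≠ l) and let Γ_1, Γ_2, Γ_3 ∈ ℝ with Γ_2 ≠ 0. If Γ_1 cot((z_3 − z_1)/2) + Γ_2 cot((z_3 − z_2)/2) = 0 (z_3 sits at a stagnation point of the field of z_1, z_2) and Γ_2 cot((z_1 − z_2)/2) + Γ_3 cot((z_1 − z_3)/2) = 0 (Γ_3 is adjusted to immobilize z_1), then automatically Γ_3 cot((z_2 − z_3)/2) + Γ_1 cot((z_2 − z_1)/2) = 0, i.e. z_2 is also immobilized and the three vortices form an equilibrium. -/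
/-- If the vortex `z₃` sits at a stagnation point of the field induced by `z₁, z₂`, and
the vorticity `Γ₃` is adjusted so as to immobilize `z₁`, then `z₂` is automatically
immobilized as well: the three vortices form an equilibrium on the cylinder of radius 1. -/
theorem third_vortex_automatically_immobilized (z₁ z₂ z₃ : ℂ)
    (h12 : Complex.sin ((z₁ - z₂) / 2) ≠ 0)
    (h13 : Complex.sin ((z₁ - z₃) / 2) ≠ 0)
    (h23 : Complex.sin ((z₂ - z₃) / 2) ≠ 0)
    (Γ₁ Γ₂ Γ₃ : ℝ) (hΓ₂ : Γ₂ ≠ 0)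
    (h1 : (Γ₁ : ℂ) * Complex.cot ((z₃ - z₁) / 2)
        + (Γ₂ : ℂ) * Complex.cot ((z₃ - z₂) / 2) = 0)
    (h2 : (Γ₂ : ℂ) * Complex.cot ((z₁ - z₂) / 2)
        + (Γ₃ : ℂ) * Complex.cot ((z₁ - z₃) / 2) = 0) :
    (Γ₃ : ℂ) * Complex.cot ((z₂ - z₃) / 2)
      + (Γ₁ : ℂ) * Complex.cot ((z₂ - z₁) / 2) = 0 := by
  have hodd : ∀ x : ℂ, Complex.cot (-x) = -Complex.cot x := by
    intro x
    simp [Complex.cot, div_neg]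
  have e31 : (z₃ - z₁) / 2 = -((z₁ - z₃) / 2) := by ring
  have e32 : (z₃ - z₂) / 2 = -((z₂ - z₃) / 2) := by ring
  have e21 : (z₂ - z₁) / 2 = -((z₁ - z₂) / 2) := by ring
  have e13 : (z₁ - z₃) / 2 = (z₁ - z₂) / 2 + (z₂ - z₃) / 2 := by ring
  rw [e31, e32, hodd, hodd] at h1
  rw [e21, hodd]
  have hG : (Γ₂ : ℂ) ≠ 0 := by exact_mod_cast hΓ₂
  have key : Complex.cot ((z₁ - z₂) / 2) * Complex.cot ((z₂ - z₃) / 2) - 1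
      = Complex.cot ((z₁ - z₃) / 2)
        * (Complex.cot ((z₁ - z₂) / 2) + Complex.cot ((z₂ - z₃) / 2)) := by
    rw [e13] at h13 ⊢
    rw [Complex.sin_add] at h13
    simp only [Complex.cot, Complex.sin_add, Complex.cos_add]
    generalize Complex.sin ((z₁ - z₂) / 2) = s at *
    generalize Complex.sin ((z₂ - z₃) / 2) = t at *
    generalize Complex.cos ((z₁ - z₂) / 2) = c at *
    generalize Complex.cos ((z₂ - z₃) / 2) = d at *
    field_simp
    ring
  generalize Complex.cot ((z₁ - z₂) / 2) = a at *
  generalize Complex.cot ((z₂ - z₃) / 2) = b at *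
  generalize Complex.cot ((z₁ - z₃) / 2) = c at *
  by_cases hc : c = 0
  · subst hc
    have hb : b = 0 := by simpa [hG] using h1
    subst hb
    simp at key
  · apply mul_left_cancel₀ hc
    linear_combination a * h1 + b * h2
end

section
/- (Critical separation for leapfrogging on a cylinder; cylindrical version of Love's criterion.) Let b > 0 and define F(ξ,η) = ( (sin²ξ + sinh²b)/(sin²ξ + sinh²η) ) · | sinh(b + η) sinh(b − η) | for (ξ,η) ∈ ℝ², η ≠ ±b... Then there exists a unique ρ ∈ (0, b) with F(0, ρ) = F(π/2, 0), and it is characterized by √2 · tanh ρ = tanh b. -/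
/-- The exponentiated reduced Hamiltonian `exp(2πH/Γ²)` of four leapfrogging vortices
with vorticities `Γ, Γ, −Γ, −Γ` at `ib ± ζ`, `−ib ∓ conj ζ` on the cylinder of radius 1,
as a function of `ζ = ξ + iη`. -/
noncomputable def leapfrogF (b ξ η : ℝ) : ℝ :=
  ((Real.sin ξ ^ 2 + Real.sinh b ^ 2) / (Real.sin ξ ^ 2 + Real.sinh η ^ 2))
    * |Real.sinh (b + η) * Real.sinh (b - η)|

theorem leapfrog_key (b : ℝ) (hb : 0 < b) (ρ : ℝ) (hρ : ρ ∈ Set.Ioo 0 b) :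
    leapfrogF b 0 ρ = leapfrogF b (Real.pi / 2) 0 ↔
      Real.sinh ρ ^ 2 * (2 + Real.sinh b ^ 2) = Real.sinh b ^ 2 := by
  obtain ⟨h0, h1⟩ := hρ
  have hs : 0 < Real.sinh ρ := Real.sinh_pos_iff.2 h0
  have hS : 0 < Real.sinh b := Real.sinh_pos_iff.2 hb
  have hp : Real.sinh (b + ρ) * Real.sinh (b - ρ) = Real.sinh b ^ 2 - Real.sinh ρ ^ 2 := by
    rw [Real.sinh_add, Real.sinh_sub]
    have e1 := Real.cosh_sq b
    have e2 := Real.cosh_sq ρ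
    linear_combination Real.sinh b ^ 2 * e2 - Real.sinh ρ ^ 2 * e1
  have hpos : 0 < Real.sinh (b + ρ) * Real.sinh (b - ρ) :=
    mul_pos (Real.sinh_pos_iff.2 (by linarith)) (Real.sinh_pos_iff.2 (by linarith))
  unfold leapfrogF
  rw [abs_of_pos hpos, hp]
  simp only [Real.sin_zero, Real.sin_pi_div_two, Real.sinh_zero, add_zero, sub_zero]
  rw [abs_of_pos (mul_pos hS hS)]
  have hs2 : Real.sinh ρ ^ 2 ≠ 0 := by positivity
  have hS2 : Real.sinh b ^ 2 ≠ 0 := by positivity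
  have e : (0 ^ 2 + Real.sinh b ^ 2) / (0 ^ 2 + Real.sinh ρ ^ 2) *
      (Real.sinh b ^ 2 - Real.sinh ρ ^ 2) =
      (Real.sinh b ^ 2 * (Real.sinh b ^ 2 - Real.sinh ρ ^ 2)) / Real.sinh ρ ^ 2 := by
    rw [zero_pow two_ne_zero, zero_add, zero_add]; ring
  rw [e, div_eq_iff hs2]
  constructor
  · intro h
    apply mul_left_cancel₀ hS2
    linear_combination -h
  · intro h
    linear_combination -(Real.sinh b ^ 2) * h

theorem leapfrog_tanh (b : ℝ) (hb : 0 < b) (ρ : ℝ) (h0 : 0 < ρ) :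
    Real.sqrt 2 * Real.tanh ρ = Real.tanh b ↔
      Real.sinh ρ ^ 2 * (2 + Real.sinh b ^ 2) = Real.sinh b ^ 2 := by
  have hs : 0 < Real.sinh ρ := Real.sinh_pos_iff.2 h0
  have hS : 0 < Real.sinh b := Real.sinh_pos_iff.2 hb
  have hc := Real.cosh_pos ρ
  have hC := Real.cosh_pos b
  have q : Real.sqrt 2 ^ 2 = 2 := Real.sq_sqrt (by norm_num)
  have e1 := Real.cosh_sq b
  have e2 := Real.cosh_sq ρ
  rw [Real.tanh_eq_sinh_div_cosh, Real.tanh_eq_sinh_div_cosh, ← mul_div_assoc,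
    div_eq_div_iff hc.ne' hC.ne', ← sq_eq_sq₀ (by positivity) (by positivity),
    mul_pow, mul_pow, mul_pow, q, e1, e2]
  constructor <;> intro h <;> linear_combination h

/-- The cylindrical version of Love's criterion: there is a unique `ρ ∈ (0,b)` at which
the level of `F` through `(0,ρ)` equals the separatrix (saddle) level `F(π/2, 0)`, and it
is characterized by `√2 tanh ρ = tanh b`. -/
theorem love_criterion_on_cylinder (b : ℝ) (hb : 0 < b) :
    (∃! ρ : ℝ, ρ ∈ Set.Ioo 0 b ∧ leapfrogF b 0 ρ = leapfrogF b (Real.pi / 2) 0) ∧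
    (∀ ρ ∈ Set.Ioo 0 b,
      (leapfrogF b 0 ρ = leapfrogF b (Real.pi / 2) 0 ↔
        Real.sqrt 2 * Real.tanh ρ = Real.tanh b)) := by
  refine ⟨?_, fun ρ hρ => (leapfrog_key b hb ρ hρ).trans (leapfrog_tanh b hb ρ hρ.1).symm⟩
  have hS : 0 < Real.sinh b := Real.sinh_pos_iff.2 hb
  have hT : 0 < 2 + Real.sinh b ^ 2 := by positivity
  have hq : 0 < Real.sinh b ^ 2 / (2 + Real.sinh b ^ 2) := by positivity
  have hmem : Real.arsinh (Real.sqrt (Real.sinh b ^ 2 / (2 + Real.sinh b ^ 2))) ∈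
      Set.Ioo 0 b := by
    constructor
    · rw [Real.arsinh_pos_iff]
      exact Real.sqrt_pos.2 hq
    · rw [← Real.sinh_lt_sinh, Real.sinh_arsinh, Real.sqrt_lt' hS, div_lt_iff₀ hT]
      nlinarith [pow_pos hS 2, pow_pos hS 4]
  refine ⟨_, ⟨hmem, ?_⟩, ?_⟩
  · rw [leapfrog_key b hb _ hmem, Real.sinh_arsinh, Real.sq_sqrt hq.le,
      div_mul_cancel₀ _ hT.ne']
  · rintro y ⟨hy, h⟩
    rw [leapfrog_key b hb y hy] at h
    have hy0 : 0 < Real.sinh y := Real.sinh_pos_iff.2 hy.1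
    rw [← eq_div_iff hT.ne'] at h
    rw [← h, Real.sqrt_sq hy0.le, Real.arsinh_sinh]
end
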